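/- Let Q ∈ 𝓛(X) be an idempotent that is neither 0 nor I. Then the conjugation orbit {W∘Q∘W⁻¹ : W an invertible element of 𝓛(X)} is a clopen subset of 𝓘(X) (with the norm topology). -/

import Mathlib

/-- Let `Q ∈ 𝓛(X)` be an idempotent that is neither `0` nor `I`. Then the
conjugation orbit `{W∘Q∘W⁻¹ : W invertible}` is a clopen subset of `𝓘(X)` (the set of
nontrivial idempotents with the norm topology). -/
theorem stmt_11 {𝕜 : Type*} [RCLike 𝕜] {X : Type*} [NormedAddCommGroup X]
    [NormedSpace 𝕜 X] [CompleteSpace X]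
    (Q : X →L[𝕜] X) (hQ : Q ∘L Q = Q) (hQ0 : Q ≠ 0) (hQ1 : Q ≠ 1) :
    IsClopen {A : {A : X →L[𝕜] X // A ∘L A = A ∧ A ≠ 0 ∧ A ≠ 1} |
      ∃ W : (X →L[𝕜] X)ˣ,
        (W : X →L[𝕜] X) * Q * ((W⁻¹ : (X →L[𝕜] X)ˣ) : X →L[𝕜] X) = (A : X →L[𝕜] X)} := by
  have key : ∀ A : {A : X →L[𝕜] X // A ∘L A = A ∧ A ≠ 0 ∧ A ≠ 1},
      ∀ᶠ B : {A : X →L[𝕜] X // A ∘L A = A ∧ A ≠ 0 ∧ A ≠ 1} in nhds A,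
        ∃ U : (X →L[𝕜] X)ˣ, (U : X →L[𝕜] X) * (A : X →L[𝕜] X) = (B : X →L[𝕜] X) * U := by
    intro A
    have hA : (A : X →L[𝕜] X) * (A : X →L[𝕜] X) = A := A.2.1
    have hc : Continuous (fun B : {A : X →L[𝕜] X // A ∘L A = A ∧ A ≠ 0 ∧ A ≠ 1} =>
        (B : X →L[𝕜] X) * (A : X →L[𝕜] X) + (1 - (B : X →L[𝕜] X)) * (1 - (A : X →L[𝕜] X))) := by
      have h := continuous_subtype_val (p := fun A : X →L[𝕜] X => A ∘L A = A ∧ A ≠ 0 ∧ A ≠ 1)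
      exact (h.mul continuous_const).add ((continuous_const.sub h).mul continuous_const)
    have h1 : (A : X →L[𝕜] X) * (A : X →L[𝕜] X)
        + (1 - (A : X →L[𝕜] X)) * (1 - (A : X →L[𝕜] X)) = 1 := by
      simp only [mul_sub, sub_mul, hA, mul_one, one_mul]
      abel
    have ho : {x : X →L[𝕜] X | IsUnit x} ∈ nhds ((A : X →L[𝕜] X) * (A : X →L[𝕜] X)
        + (1 - (A : X →L[𝕜] X)) * (1 - (A : X →L[𝕜] X))) := by
      apply Units.isOpen.mem_nhds
      rw [h1]
      exact isUnit_one
    filter_upwards [hc.continuousAt.preimage_mem_nhds ho] with B hB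
    obtain ⟨U, hU⟩ := hB
    have hB : (B : X →L[𝕜] X) * (B : X →L[𝕜] X) = B := B.2.1
    refine ⟨U, ?_⟩
    rw [hU]
    simp only [mul_sub, sub_mul, mul_add, add_mul, mul_assoc, hA, mul_one, one_mul]
    simp only [← mul_assoc, hB]
    abel
  constructor
  · rw [← isOpen_compl_iff, isOpen_iff_mem_nhds]
    intro A hA
    filter_upwards [key A] with B hB
    rintro ⟨W, hW⟩
    obtain ⟨U, hU⟩ := hB
    refine hA ⟨U⁻¹ * W, ?_⟩
    have : (A : X →L[𝕜] X) = ((U⁻¹ : (X →L[𝕜] X)ˣ) : X →L[𝕜] X) * (B : X →L[𝕜] X) * U := by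
      rw [mul_assoc, ← hU, Units.inv_mul_cancel_left]
    rw [this, ← hW]
    simp [mul_assoc]
  · rw [isOpen_iff_mem_nhds]
    rintro A ⟨W, hW⟩
    filter_upwards [key A] with B hB
    obtain ⟨U, hU⟩ := hB
    refine ⟨U * W, ?_⟩
    have : (B : X →L[𝕜] X) = U * (A : X →L[𝕜] X) * ((U⁻¹ : (X →L[𝕜] X)ˣ) : X →L[𝕜] X) := by
      rw [hU, Units.mul_inv_cancel_right]
    rw [this, ← hW]
    simp [mul_assoc]
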